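/- Let 1 ≤ j ≤ N−2 and let m_{j+1} ≥ m_{j+2} ≥ … ≥ m_{N−1} ≥ m_N := 0 be nonnegative integers. Set Y = ∏_{a=j+2}^{N−1} U(t^{a−1}_{m_{a−1}−m_a+1},…,t^{a−1}_{m_{a−1}}; t^a_1,…,t^a_{m_a}). Then the rational function obtained by successively applying the q-symmetrizations over the variables of type j+2, then type j+3, …, then type N−1 to Y, i.e. Sym_{t^{j+2}_{1..m_{j+2}}}( ⋯ Sym_{t^{N−1}_{1..m_{N−1}}}(Y) ⋯ ), is symmetric (invariant under every plain permutation of the variables) within each group {t^{j+1}_{m_{j+1}−m_a+1},…,t^{j+1}_{m_{j+1}−m_{a+1}}} for a = j+1,…,N−1. -/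

import Mathlib

open scoped BigOperators
open MvPolynomial

noncomputable section

/-- The base field `ℂ(q)`. -/
abbrev F0 : Type := RatFunc ℂ

/-- The field `K` of rational functions over `ℂ(q)` in the variables `t^a_ℓ`,
indexed by pairs `(a, ℓ) : ℕ × ℕ`. -/
abbrev K2 : Type := FractionRing (MvPolynomial (ℕ × ℕ) F0)

/-- The element `q` of `K`. -/
def q2 : K2 := algebraMap (MvPolynomial (ℕ × ℕ) F0) _ (C RatFunc.X)

/-- The variable `t^a_ℓ`. -/
def tV (a ℓ : ℕ) : K2 := algebraMap (MvPolynomial (ℕ × ℕ) F0) _ (X (a, ℓ))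

/-- The interval `{lo+1, …, lo+k} ⊆ ℕ` identified with `Fin k`. -/
def intervalEquiv (lo k : ℕ) : Fin k ≃ {x : ℕ // lo + 1 ≤ x ∧ x < lo + 1 + k} where
  toFun i := ⟨lo + 1 + (i : ℕ), ⟨Nat.le_add_right _ _, by have := i.isLt; omega⟩⟩
  invFun x := ⟨(x : ℕ) - (lo + 1), by have := x.2; omega⟩
  left_inv i := Fin.ext (by simp)
  right_inv x := Subtype.ext (by have := x.2; simp; omega)

/-- The permutation of `ℕ` acting as `σ` on the interval `{lo+1,…,lo+k}`
(sending `lo+1+i ↦ lo+1+σ(i)`) and as the identity elsewhere. -/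
def intervalPerm (lo k : ℕ) (σ : Equiv.Perm (Fin k)) : Equiv.Perm ℕ :=
  σ.extendDomain (intervalEquiv lo k)

/-- The permutation of the variable indices permuting the second component of
variables of type `a` by `intervalPerm lo k σ`, fixing all other variables. -/
def blockPerm (a lo k : ℕ) (σ : Equiv.Perm (Fin k)) : Equiv.Perm (ℕ × ℕ) :=
  Equiv.prodShear (Equiv.refl ℕ)
    (fun b => if b = a then intervalPerm lo k σ else Equiv.refl ℕ)

/-- The substitution field automorphism of `K` induced by a permutation
of the variable indices. -/
def liftP (e : Equiv.Perm (ℕ × ℕ)) : K2 ≃+* K2 :=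
  IsFractionRing.ringEquivOfRingEquiv (MvPolynomial.renameEquiv F0 e).toRingEquiv

/-- The q-symmetrization over the group of variables `t^a_ℓ`, `lo < ℓ ≤ lo + k`. -/
def symBlock (a lo k : ℕ) (G : K2) : K2 :=
  ∑ σ : Equiv.Perm (Fin k),
    (∏ p ∈ Finset.univ.filter
        (fun p : Fin k × Fin k => p.1 < p.2 ∧ σ p.2 < σ p.1),
      (q2 * tV a (lo + 1 + (σ p.2 : ℕ)) - q2⁻¹ * tV a (lo + 1 + (σ p.1 : ℕ))) /
        (q2⁻¹ * tV a (lo + 1 + (σ p.2 : ℕ)) - q2 * tV a (lo + 1 + (σ p.1 : ℕ)))) *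
      liftP (blockPerm a lo k σ) G

/-- `U(x₁,…,x_k; y₁,…,y_k) = ∏_i (y_i/x_i)/(1−y_i/x_i) ·
∏_{m<n} (q⁻¹ − q·y_m/x_n)/(1 − y_m/x_n)` (for `1`-based families `x y : ℕ → K`). -/
def Ub (x y : ℕ → K2) (k : ℕ) : K2 :=
  (∏ i ∈ Finset.range k, (y (i + 1) / x (i + 1)) / (1 - y (i + 1) / x (i + 1))) *
    ∏ p ∈ (Finset.range k ×ˢ Finset.range k).filter (fun p => p.1 < p.2),
      (q2⁻¹ - q2 * y (p.1 + 1) / x (p.2 + 1)) / (1 - y (p.1 + 1) / x (p.2 + 1))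

/-- The composition of q-symmetrizations
`Sym_{t^{N−k}} ∘ ⋯ ∘ Sym_{t^{N−2}} ∘ Sym_{t^{N−1}}`, each over the full set of
variables `t^a_1,…,t^a_{m_a}` of its type. -/
def iterSym (N : ℕ) (m : ℕ → ℕ) : ℕ → K2 → K2
  | 0, G => G
  | (k + 1), G => symBlock (N - 1 - k) 0 (m (N - 1 - k)) (iterSym N m k G)

/-- `Y = ∏_{a=j+2}^{N−1} U(t^{a−1}_{m_{a−1}−m_a+1},…,t^{a−1}_{m_{a−1}}; t^a_1,…,t^a_{m_a})`. -/
def Ycur (N j : ℕ) (m : ℕ → ℕ) : K2 :=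
  ∏ a ∈ Finset.Icc (j + 2) (N - 1),
    Ub (fun i => tV (a - 1) (m (a - 1) - m a + i)) (fun i => tV a i) (m a)

/-! ### Basic facts -/

lemma liftP_algebraMap (e : Equiv.Perm (ℕ × ℕ)) (p : MvPolynomial (ℕ × ℕ) F0) :
    liftP e (algebraMap _ K2 p) = algebraMap _ K2 (rename e p) := by
  unfold liftP
  rw [IsFractionRing.ringEquivOfRingEquiv_algebraMap]
  rfl

lemma liftP_tV (e : Equiv.Perm (ℕ × ℕ)) (a l : ℕ) :
    liftP e (tV a l) = tV (e (a, l)).1 (e (a, l)).2 := by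
  unfold tV
  rw [liftP_algebraMap, rename_X]

lemma liftP_q2 (e : Equiv.Perm (ℕ × ℕ)) : liftP e q2 = q2 := by
  unfold q2
  rw [liftP_algebraMap, rename_C]

lemma liftP_mul (e f : Equiv.Perm (ℕ × ℕ)) (x : K2) :
    liftP (e * f) x = liftP e (liftP f x) := by
  have h : (MvPolynomial.renameEquiv F0 (e * f)).toRingEquiv =
      (MvPolynomial.renameEquiv F0 f).toRingEquiv.trans
        (MvPolynomial.renameEquiv F0 e).toRingEquiv := by
    ext p
    exact congrArg _ (rename_rename f e p).symm
  unfold liftP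
  rw [h, IsFractionRing.ringEquivOfRingEquiv_comp K2 K2 K2]
  rfl

lemma liftP_one (x : K2) : liftP 1 x = x := by
  have h : (MvPolynomial.renameEquiv F0 (1 : Equiv.Perm (ℕ × ℕ))).toRingEquiv =
      RingEquiv.refl _ := by
    ext p
    exact congrArg _ (rename_id_apply p)
  unfold liftP
  rw [h, IsFractionRing.ringEquivOfRingEquiv_refl]
  rfl

lemma intervalPerm_apply (lo k : ℕ) (σ : Equiv.Perm (Fin k)) (i : Fin k) :
    intervalPerm lo k σ (lo + 1 + i) = lo + 1 + (σ i : ℕ) :=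
  σ.extendDomain_apply_image (intervalEquiv lo k) i

lemma intervalPerm_apply_out (lo k : ℕ) (σ : Equiv.Perm (Fin k)) (l : ℕ)
    (h : ¬ (lo + 1 ≤ l ∧ l < lo + 1 + k)) : intervalPerm lo k σ l = l :=
  σ.extendDomain_apply_not_subtype (intervalEquiv lo k) h

lemma blockPerm_self (a lo k : ℕ) (σ : Equiv.Perm (Fin k)) (l : ℕ) :
    blockPerm a lo k σ (a, l) = (a, intervalPerm lo k σ l) := by
  simp [blockPerm]

lemma blockPerm_ne (a lo k : ℕ) (σ : Equiv.Perm (Fin k)) (b l : ℕ) (h : b ≠ a) :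
    blockPerm a lo k σ (b, l) = (b, l) := by
  simp [blockPerm, h]

lemma intervalPerm_mul (lo k : ℕ) (σ τ : Equiv.Perm (Fin k)) :
    intervalPerm lo k (σ * τ) = intervalPerm lo k σ * intervalPerm lo k τ :=
  (Equiv.Perm.extendDomain_mul _ _ _).symm

lemma blockPerm_mul (a lo k : ℕ) (σ τ : Equiv.Perm (Fin k)) :
    blockPerm a lo k (σ * τ) = blockPerm a lo k σ * blockPerm a lo k τ := by
  ext1 ⟨b, l⟩
  rw [Equiv.Perm.mul_apply]
  by_cases h : b = a
  · subst h
    rw [blockPerm_self, blockPerm_self, blockPerm_self, intervalPerm_mul]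
    rfl
  · rw [blockPerm_ne _ _ _ _ _ _ h, blockPerm_ne _ _ _ _ _ _ h, blockPerm_ne _ _ _ _ _ _ h]

lemma blockPerm_one (a lo k : ℕ) : blockPerm a lo k 1 = 1 := by
  ext1 ⟨b, l⟩
  by_cases h : b = a
  · subst h
    rw [blockPerm_self, intervalPerm, Equiv.Perm.extendDomain_one]
    rfl
  · rw [blockPerm_ne _ _ _ _ _ _ h]; rfl

/-- adjacent transposition of variables of type `b`. -/
def sw (b l : ℕ) : Equiv.Perm (ℕ × ℕ) := Equiv.swap (b, l) (b, l + 1)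

lemma sw_self (b l x : ℕ) : sw b l (b, x) = (b, Equiv.swap l (l + 1) x) := by
  simp only [sw, Equiv.swap_apply_def, Prod.mk.injEq, true_and]
  split_ifs <;> rfl

lemma sw_ne (b l c x : ℕ) (h : c ≠ b) : sw b l (c, x) = (c, x) := by
  apply Equiv.swap_apply_of_ne_of_ne <;> simp [h]

lemma intervalPerm_swap (lo k : ℕ) (i j : Fin k) (h : (j : ℕ) = i + 1) :
    intervalPerm lo k (Equiv.swap i j) = Equiv.swap (lo + 1 + i) (lo + 1 + i + 1) := by
  ext1 l
  by_cases hl : lo + 1 ≤ l ∧ l < lo + 1 + k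
  · obtain ⟨x, rfl⟩ : ∃ x : Fin k, l = lo + 1 + x := ⟨⟨l - (lo + 1), by omega⟩, by simp; omega⟩
    rw [intervalPerm_apply]
    simp only [Equiv.swap_apply_def, Fin.ext_iff]
    split_ifs <;> omega
  · rw [intervalPerm_apply_out _ _ _ _ hl]
    have := i.2
    have := j.2
    rw [Equiv.swap_apply_of_ne_of_ne] <;> omega

lemma blockPerm_swap (a lo k : ℕ) (i j : Fin k) (h : (j : ℕ) = i + 1) :
    blockPerm a lo k (Equiv.swap i j) = sw a (lo + 1 + i) := by
  ext1 ⟨b, l⟩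
  by_cases hb : b = a
  · subst hb
    rw [blockPerm_self, sw_self, intervalPerm_swap _ _ _ _ h]
  · rw [blockPerm_ne _ _ _ _ _ _ hb, sw_ne _ _ _ _ hb]

lemma inv_of_adjacent (b lo k : ℕ) (X : K2)
    (h : ∀ l, lo + 1 ≤ l → l + 1 ≤ lo + k → liftP (sw b l) X = X) (σ : Equiv.Perm (Fin k)) :
    liftP (blockPerm b lo k σ) X = X := by
  cases k with
  | zero => rw [Subsingleton.elim σ 1, blockPerm_one, liftP_one]
  | succ n =>
    have hσ : σ ∈ Submonoid.closure (Set.range fun i : Fin n ↦ Equiv.swap i.castSucc i.succ) := by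
      rw [Equiv.Perm.mclosure_swap_castSucc_succ]; trivial
    induction hσ using Submonoid.closure_induction with
    | mem x hx =>
      obtain ⟨i, rfl⟩ := hx
      dsimp only
      rw [blockPerm_swap _ _ _ _ _ (by simp)]
      apply h
      · omega
      · have := i.2
        simp; omega
    | one => rw [blockPerm_one, liftP_one]
    | mul x y _ _ hx hy => rw [blockPerm_mul, liftP_mul, hy, hx]

/-! ### Nonvanishing -/

lemma q2_ne : q2 ≠ 0 := by
  unfold q2
  rw [Ne, FaithfulSMul.algebraMap_eq_zero_iff, C_eq_zero]
  exact RatFunc.X_ne_zero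

lemma lin_ne (x y : F0) (hx : x ≠ 0) (a l b l' : ℕ) (h : (a, l) ≠ (b, l')) :
    algebraMap (MvPolynomial (ℕ × ℕ) F0) K2 (C x) * tV a l
      - algebraMap (MvPolynomial (ℕ × ℕ) F0) K2 (C y) * tV b l' ≠ 0 := by
  unfold tV
  rw [← map_mul, ← map_mul, ← map_sub, Ne, FaithfulSMul.algebraMap_eq_zero_iff]
  intro h0
  have := congrArg (coeff (Finsupp.single (a, l) 1)) h0
  rw [coeff_sub, coeff_C_mul, coeff_C_mul, coeff_X, coeff_X, if_pos rfl, if_neg] at this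
  · simp [hx] at this
  · intro h1
    exact h ((Finsupp.single_left_inj one_ne_zero).1 h1).symm

lemma tV_sub_ne (a l b l' : ℕ) (h : (a, l) ≠ (b, l')) : tV a l - tV b l' ≠ 0 := by
  have := lin_ne 1 1 one_ne_zero a l b l' h
  simpa using this

lemma tV_ne (a l : ℕ) : tV a l ≠ 0 := by
  have := lin_ne 1 0 one_ne_zero a l a (l + 1) (by simp)
  simpa using this

lemma q2_inv : q2⁻¹ = algebraMap (MvPolynomial (ℕ × ℕ) F0) K2 (C (RatFunc.X)⁻¹) := by
  apply inv_eq_of_mul_eq_one_right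
  unfold q2
  rw [← map_mul, ← map_mul, mul_inv_cancel₀ RatFunc.X_ne_zero, map_one, map_one]

lemma f_ne (a l l' : ℕ) (h : l ≠ l') : q2⁻¹ * tV a l - q2 * tV a l' ≠ 0 := by
  rw [q2_inv]
  exact lin_ne _ _ (inv_ne_zero RatFunc.X_ne_zero) a l a l' (by simpa using h)

/-! ### The q-symmetrization as an antisymmetrization -/

/-- The elementary factor. -/
def ff (a x y : ℕ) : K2 := q2⁻¹ * tV a (0 + 1 + x) - q2 * tV a (0 + 1 + y)

lemma ff_ne (a x y : ℕ) (h : x ≠ y) : ff a x y ≠ 0 := f_ne _ _ _ (by omega)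

/-- The pairs `p.1 < p.2`. -/
def prs (k : ℕ) : Finset (Fin k × Fin k) := Finset.univ.filter (fun p => p.1 < p.2)

/-- The q-Vandermonde product. -/
def DD (a k : ℕ) : K2 := ∏ p ∈ prs k, ff a p.1 p.2

lemma DD_ne (a k : ℕ) : DD a k ≠ 0 := by
  refine Finset.prod_ne_zero_iff.2 fun p hp => ff_ne _ _ _ ?_
  have : p.1 < p.2 := by simpa [prs] using hp
  have : (p.1 : ℕ) < p.2 := this
  omega

lemma liftP_block_ff (a k : ℕ) (σ : Equiv.Perm (Fin k)) (x y : Fin k) :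
    liftP (blockPerm a 0 k σ) (ff a x y) = ff a (σ x) (σ y) := by
  unfold ff
  rw [map_sub, map_mul, map_mul, map_inv₀, liftP_q2, liftP_tV, liftP_tV, blockPerm_self,
    blockPerm_self, intervalPerm_apply, intervalPerm_apply]

lemma prod_prs (k : ℕ) (g : Fin k → Fin k → K2) :
    ∏ p ∈ prs k, g p.1 p.2 = ∏ j, ∏ i ∈ Finset.Iio j, g i j := by
  rw [Finset.prod_sigma']
  refine Finset.prod_bij' (fun p _ => ⟨p.2, p.1⟩) (fun p _ => (p.2, p.1)) ?_ ?_ ?_ ?_ ?_ <;>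
    simp [prs]

/-- The weight in `symBlock`. -/
def ww (a k : ℕ) (σ : Equiv.Perm (Fin k)) : K2 :=
  ∏ p ∈ Finset.univ.filter
        (fun p : Fin k × Fin k => p.1 < p.2 ∧ σ p.2 < σ p.1),
      (q2 * tV a (0 + 1 + (σ p.2 : ℕ)) - q2⁻¹ * tV a (0 + 1 + (σ p.1 : ℕ))) /
        (q2⁻¹ * tV a (0 + 1 + (σ p.2 : ℕ)) - q2 * tV a (0 + 1 + (σ p.1 : ℕ)))

lemma symBlock_eq_ww (a k : ℕ) (G : K2) :
    symBlock a 0 k G = ∑ σ, ww a k σ * liftP (blockPerm a 0 k σ) G := rfl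

/-- antisymmetric version of `ff`. -/
def gg (a : ℕ) {k : ℕ} (x y : Fin k) : K2 :=
  if x < y then ff a x y else if y < x then - ff a y x else 0

lemma gg_anti (a : ℕ) {k : ℕ} (x y : Fin k) : gg a x y = - gg a y x := by
  unfold gg
  rcases lt_trichotomy x y with h | h | h
  · simp [h, h.not_gt]
  · simp [h]
  · simp [h, h.not_gt]

lemma ww_eq (a k : ℕ) (σ : Equiv.Perm (Fin k)) :
    ww a k σ * (((σ.sign : ℤ) : K2) * DD a k) = liftP (blockPerm a 0 k σ) (DD a k) := by
  have h1 : ((σ.sign : ℤ) : K2) * DD a k = ∏ p ∈ prs k, gg a (σ p.1) (σ p.2) := by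
    rw [prod_prs k (fun x y => gg a (σ x) (σ y)),
      Equiv.Perm.prod_Iio_comp_eq_sign_mul_prod σ (gg_anti a), ← prod_prs k (gg a)]
    congr 1
    refine Finset.prod_congr rfl fun p hp => ?_
    have : p.1 < p.2 := by simpa [prs] using hp
    simp [gg, this]
  have h2 : ww a k σ = ∏ p ∈ prs k, if σ p.2 < σ p.1 then
      - ff a (σ p.1) (σ p.2) / ff a (σ p.2) (σ p.1) else 1 := by
    rw [← Finset.prod_filter, prs, Finset.filter_filter]
    refine Finset.prod_congr rfl fun p hp => ?_
    unfold ff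
    rw [neg_sub]
  rw [h1, h2, ← Finset.prod_mul_distrib, DD, map_prod]
  refine Finset.prod_congr rfl fun p hp => ?_
  rw [liftP_block_ff]
  have hp : p.1 < p.2 := by simpa [prs] using hp
  have hne : σ p.1 ≠ σ p.2 := fun h => hp.ne (σ.injective h)
  rcases lt_or_gt_of_ne hne with h | h
  · simp [gg, h, h.not_gt]
  · have hf : ff a (σ p.2) (σ p.1) ≠ 0 := ff_ne _ _ _ (fun h' => h.ne (Fin.ext h'))
    rw [if_pos h, gg, if_neg h.not_gt, if_pos h]
    field_simp

lemma symBlock_alt (a k : ℕ) (G : K2) :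
    DD a k * symBlock a 0 k G =
      ∑ σ : Equiv.Perm (Fin k), ((σ.sign : ℤ) : K2) * liftP (blockPerm a 0 k σ) (DD a k * G) := by
  rw [symBlock_eq_ww, Finset.mul_sum]
  refine Finset.sum_congr rfl fun σ _ => ?_
  rw [map_mul, ← ww_eq]
  have : ((σ.sign : ℤ) : K2) * ((σ.sign : ℤ) : K2) = 1 := by
    rw [← Int.cast_mul, ← Units.val_mul, Int.units_mul_self]; simp
  linear_combination (- DD a k * ww a k σ * liftP (blockPerm a 0 k σ) G) * this

lemma symBlock_zero_of_inv (a k : ℕ) (G : K2) (i j : Fin k) (hij : i ≠ j)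
    (h : liftP (blockPerm a 0 k (Equiv.swap i j)) (DD a k * G) = DD a k * G) :
    symBlock a 0 k G = 0 := by
  refine (mul_eq_zero.1 ?_).resolve_left (DD_ne a k)
  rw [symBlock_alt]
  refine Finset.sum_involution (fun σ _ => σ * Equiv.swap i j) ?_ ?_ ?_ ?_
  · intro σ _
    rw [blockPerm_mul, liftP_mul, h, Equiv.Perm.sign_mul, Equiv.Perm.sign_swap hij]
    simp
  · intro σ _ _ h'
    have := mul_eq_left.1 h'
    exact hij (Equiv.swap_eq_one_iff.1 this)
  · intro σ _; exact Finset.mem_univ _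
  · intro σ _
    simp [mul_assoc]

lemma symBlock_sub (a lo k : ℕ) (G H : K2) :
    symBlock a lo k (G - H) = symBlock a lo k G - symBlock a lo k H := by
  unfold symBlock
  rw [← Finset.sum_sub_distrib]
  refine Finset.sum_congr rfl fun σ _ => ?_
  rw [map_sub, mul_sub]

lemma symBlock_mul (a lo k : ℕ) (G H : K2)
    (h : ∀ σ, liftP (blockPerm a lo k σ) G = G) :
    symBlock a lo k (G * H) = G * symBlock a lo k H := by
  unfold symBlock
  rw [Finset.mul_sum]
  refine Finset.sum_congr rfl fun σ _ => ?_
  rw [map_mul, h, mul_left_comm]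

lemma liftP_comm (a lo k b l : ℕ) (hab : b ≠ a) (σ : Equiv.Perm (Fin k)) (G : K2) :
    liftP (sw b l) (liftP (blockPerm a lo k σ) G) =
      liftP (blockPerm a lo k σ) (liftP (sw b l) G) := by
  rw [← liftP_mul, ← liftP_mul]
  congr 1
  congr 1
  apply Equiv.Perm.Disjoint.commute
  rintro ⟨c, x⟩
  by_cases h : c = a
  · left
    exact sw_ne _ _ _ _ (by omega)
  · right
    exact blockPerm_ne _ _ _ _ _ _ h

lemma liftP_sw_tV_ne (b l a x : ℕ) (h : a ≠ b) : liftP (sw b l) (tV a x) = tV a x := by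
  rw [liftP_tV, sw_ne _ _ _ _ h]

lemma liftP_sw_tV (b l x : ℕ) :
    liftP (sw b l) (tV b x) = tV b (Equiv.swap l (l + 1) x) := by
  rw [liftP_tV, sw_self]

lemma liftP_symBlock (a k b l : ℕ) (hab : b ≠ a) (G : K2) :
    liftP (sw b l) (symBlock a 0 k G) = symBlock a 0 k (liftP (sw b l) G) := by
  rw [symBlock_eq_ww, symBlock_eq_ww, map_sum]
  refine Finset.sum_congr rfl fun σ _ => ?_
  rw [map_mul, liftP_comm _ _ _ _ _ hab]
  congr 1
  unfold ww
  rw [map_prod]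
  refine Finset.prod_congr rfl fun p _ => ?_
  simp only [map_div₀, map_sub, map_mul, map_inv₀, liftP_q2, liftP_sw_tV_ne _ _ _ _ hab.symm]

/-! ### The local exchange identity -/

lemma local_identity {K : Type*} [Field K] (q x1 x2 y1 y2 : K) (hq : q ≠ 0) (hx1 : x1 ≠ 0)
    (hx2 : x2 ≠ 0) (h11 : x1 - y1 ≠ 0) (h12 : x1 - y2 ≠ 0) (h21 : x2 - y1 ≠ 0)
    (h22 : x2 - y2 ≠ 0) :
    (q⁻¹ * y2 - q * y1) *
      ((y2 / x1 / (1 - y2 / x1)) * (y1 / x2 / (1 - y1 / x2)) *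
          ((q⁻¹ - q * y2 / x2) / (1 - y2 / x2)) -
        (y2 / x2 / (1 - y2 / x2)) * (y1 / x1 / (1 - y1 / x1)) *
          ((q⁻¹ - q * y2 / x1) / (1 - y2 / x1))) =
    (q⁻¹ * y1 - q * y2) *
      ((y1 / x1 / (1 - y1 / x1)) * (y2 / x2 / (1 - y2 / x2)) *
          ((q⁻¹ - q * y1 / x2) / (1 - y1 / x2)) -
        (y1 / x2 / (1 - y1 / x2)) * (y2 / x1 / (1 - y2 / x1)) *
          ((q⁻¹ - q * y1 / x1) / (1 - y1 / x1))) := by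
  have e : ∀ x y : K, x ≠ 0 → y / x / (1 - y / x) = y / (x - y) := by
    intro x y hx
    rw [one_sub_div hx, div_div_div_cancel_right₀ hx]
  have e' : ∀ x y : K, x ≠ 0 → (q⁻¹ - q * y / x) / (1 - y / x) = (q⁻¹ * x - q * y) / (x - y) := by
    intro x y hx
    rw [one_sub_div hx, ← div_div_div_cancel_right₀ hx (q⁻¹ * x - q * y),
      sub_div (q⁻¹ * x),
      mul_div_cancel_right₀ _ hx]
  rw [e _ _ hx1, e _ _ hx1, e _ _ hx2, e _ _ hx2, e' _ _ hx1, e' _ _ hx1, e' _ _ hx2, e' _ _ hx2]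
  field_simp
  ring

/-- diagonal factor of `Ub` -/
def dl (a b c m n : ℕ) : K2 :=
  (tV a (m + 1) / tV b (c + (n + 1))) / (1 - tV a (m + 1) / tV b (c + (n + 1)))

/-- off-diagonal factor of `Ub` -/
def gm (a b c m n : ℕ) : K2 :=
  (q2⁻¹ - q2 * tV a (m + 1) / tV b (c + (n + 1))) / (1 - tV a (m + 1) / tV b (c + (n + 1)))

lemma Ub_eq (a b c k : ℕ) :
    Ub (fun i => tV b (c + i)) (fun i => tV a i) k =
      (∏ n ∈ Finset.range k, dl a b c n n) *
        ∏ p ∈ (Finset.range k ×ˢ Finset.range k).filter (fun p => p.1 < p.2),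
          gm a b c p.1 p.2 := rfl

lemma swap_shift (c i n : ℕ) :
    Equiv.swap (c + i) (c + i + 1) (c + n) = c + Equiv.swap i (i + 1) n := by
  simp only [Equiv.swap_apply_def]
  split_ifs <;> omega

lemma swap_shift' (i n : ℕ) :
    Equiv.swap (i + 1) (i + 1 + 1) (n + 1) = Equiv.swap i (i + 1) n + 1 := by
  simp only [Equiv.swap_apply_def]
  split_ifs <;> omega

lemma t_y (a i n : ℕ) :
    liftP (sw a (i + 1)) (tV a (n + 1)) = tV a (Equiv.swap i (i + 1) n + 1) := by
  rw [liftP_sw_tV, swap_shift']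

lemma s_x (b c i n : ℕ) :
    liftP (sw b (c + (i + 1))) (tV b (c + (n + 1))) =
      tV b (c + (Equiv.swap i (i + 1) n + 1)) := by
  rw [liftP_sw_tV, swap_shift, swap_shift']

lemma t_dl (a b c i m n : ℕ) (hab : b ≠ a) :
    liftP (sw a (i + 1)) (dl a b c m n) = dl a b c (Equiv.swap i (i + 1) m) n := by
  unfold dl
  simp only [map_div₀, map_sub, map_one, t_y, liftP_sw_tV_ne _ _ _ _ hab]

lemma s_dl (a b c i m n : ℕ) (hab : b ≠ a) :
    liftP (sw b (c + (i + 1))) (dl a b c m n) = dl a b c m (Equiv.swap i (i + 1) n) := by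
  unfold dl
  simp only [map_div₀, map_sub, map_one, s_x, liftP_sw_tV_ne _ _ _ _ hab.symm]

lemma t_gm (a b c i m n : ℕ) (hab : b ≠ a) :
    liftP (sw a (i + 1)) (gm a b c m n) = gm a b c (Equiv.swap i (i + 1) m) n := by
  unfold gm
  simp only [map_div₀, map_sub, map_one, map_mul, map_inv₀, liftP_q2, t_y,
    liftP_sw_tV_ne _ _ _ _ hab]

lemma s_gm (a b c i m n : ℕ) (hab : b ≠ a) :
    liftP (sw b (c + (i + 1))) (gm a b c m n) = gm a b c m (Equiv.swap i (i + 1) n) := by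
  unfold gm
  simp only [map_div₀, map_sub, map_one, map_mul, map_inv₀, liftP_q2, s_x,
    liftP_sw_tV_ne _ _ _ _ hab.symm]

/-- off-diagonal index set without `(i, i+1)` -/
def SS (k i : ℕ) : Finset (ℕ × ℕ) :=
  ((Finset.range k ×ˢ Finset.range k).filter (fun p => p.1 < p.2)).erase (i, i + 1)

/-- The part of `Ub` invariant under both swaps. -/
def RR (a b c k i : ℕ) : K2 :=
  (∏ n ∈ ((Finset.range k).erase i).erase (i + 1), dl a b c n n) *
    ∏ p ∈ SS k i, gm a b c p.1 p.2

lemma Ub_split (a b c k i : ℕ) (hi : i + 1 < k) :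
    Ub (fun i => tV b (c + i)) (fun i => tV a i) k =
      dl a b c i i * dl a b c (i + 1) (i + 1) * gm a b c i (i + 1) * RR a b c k i := by
  rw [Ub_eq, RR, SS,
    ← Finset.mul_prod_erase (Finset.range k) (fun n => dl a b c n n)
      (a := i) (by simp; omega),
    ← Finset.mul_prod_erase ((Finset.range k).erase i) (fun n => dl a b c n n)
      (a := i + 1) (by simp; omega),
    ← Finset.mul_prod_erase _ (fun p : ℕ × ℕ => gm a b c p.1 p.2) (a := (i, i + 1))
      (by simp; omega)]
  ring

lemma mem_SS (k i m n : ℕ) : (m, n) ∈ SS k i ↔ m < n ∧ n < k ∧ ¬ (m = i ∧ n = i + 1) := by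
  simp only [SS, Finset.mem_erase, Finset.mem_filter, Finset.mem_product, Finset.mem_range, ne_eq,
    Prod.mk.injEq]
  omega

lemma t_RR (a b c k i : ℕ) (hab : b ≠ a) :
    liftP (sw a (i + 1)) (RR a b c k i) = RR a b c k i := by
  unfold RR
  rw [map_mul, map_prod, map_prod]
  congr 1
  · refine Finset.prod_congr rfl fun n hn => ?_
    simp only [Finset.mem_erase, ne_eq] at hn
    rw [t_dl _ _ _ _ _ _ hab, Equiv.swap_apply_of_ne_of_ne hn.2.1 hn.1]
  · refine Finset.prod_nbij' (fun p => (Equiv.swap i (i + 1) p.1, p.2))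
      (fun p => (Equiv.swap i (i + 1) p.1, p.2)) ?_ ?_ ?_ ?_ ?_
    · rintro ⟨m, n⟩ h
      rw [mem_SS] at h ⊢
      simp only [Equiv.swap_apply_def]
      split_ifs <;> omega
    · rintro ⟨m, n⟩ h
      rw [mem_SS] at h ⊢
      simp only [Equiv.swap_apply_def]
      split_ifs <;> omega
    · rintro ⟨m, n⟩ h
      simp
    · rintro ⟨m, n⟩ h
      simp
    · rintro ⟨m, n⟩ h
      rw [t_gm _ _ _ _ _ _ hab]

lemma s_RR (a b c k i : ℕ) (hab : b ≠ a) (hi : i + 1 < k) :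
    liftP (sw b (c + (i + 1))) (RR a b c k i) = RR a b c k i := by
  unfold RR
  rw [map_mul, map_prod, map_prod]
  congr 1
  · refine Finset.prod_congr rfl fun n hn => ?_
    simp only [Finset.mem_erase, ne_eq] at hn
    rw [s_dl _ _ _ _ _ _ hab, Equiv.swap_apply_of_ne_of_ne hn.2.1 hn.1]
  · refine Finset.prod_nbij' (fun p => (p.1, Equiv.swap i (i + 1) p.2))
      (fun p => (p.1, Equiv.swap i (i + 1) p.2)) ?_ ?_ ?_ ?_ ?_
    · rintro ⟨m, n⟩ h
      rw [mem_SS] at h ⊢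
      simp only [Equiv.swap_apply_def]
      split_ifs <;> omega
    · rintro ⟨m, n⟩ h
      rw [mem_SS] at h ⊢
      simp only [Equiv.swap_apply_def]
      split_ifs <;> omega
    · rintro ⟨m, n⟩ h
      simp
    · rintro ⟨m, n⟩ h
      simp
    · rintro ⟨m, n⟩ h
      rw [s_gm _ _ _ _ _ _ hab]

/-- The part of `DD` invariant under the swap. -/
def D' (a k : ℕ) (i j : Fin k) : K2 := ∏ p ∈ (prs k).erase (i, j), ff a p.1 p.2

lemma DD_split (a k : ℕ) (i j : Fin k) (h : (j : ℕ) = i + 1) :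
    DD a k = ff a i j * D' a k i j := by
  unfold DD D'
  rw [Finset.mul_prod_erase (prs k) (fun p : Fin k × Fin k => ff a p.1 p.2) (a := (i, j))]
  simp only [prs, Finset.mem_filter, Finset.mem_univ, true_and, Fin.lt_def]
  omega

lemma t_D' (a k : ℕ) (i j : Fin k) (h : (j : ℕ) = i + 1) :
    liftP (blockPerm a 0 k (Equiv.swap i j)) (D' a k i j) = D' a k i j := by
  unfold D'
  rw [map_prod]
  have key : ∀ p ∈ (prs k).erase (i, j),
      (Equiv.swap i j p.1, Equiv.swap i j p.2) ∈ (prs k).erase (i, j) := by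
    rintro ⟨m, n⟩ hp
    simp only [prs, Finset.mem_erase, Finset.mem_filter, Finset.mem_univ, true_and, Fin.lt_def,
      ne_eq, Prod.mk.injEq, Fin.ext_iff, Equiv.swap_apply_def] at hp ⊢
    split_ifs <;> omega
  refine Finset.prod_nbij' (fun p => (Equiv.swap i j p.1, Equiv.swap i j p.2))
      (fun p => (Equiv.swap i j p.1, Equiv.swap i j p.2)) key key ?_ ?_ ?_
  · rintro ⟨m, n⟩ _
    simp
  · rintro ⟨m, n⟩ _
    simp
  · rintro ⟨m, n⟩ _
    rw [liftP_block_ff]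

lemma key_step (a b c k i : ℕ) (hab : b ≠ a) (hi : i + 1 < k) (F : K2)
    (hs : liftP (sw b (c + (i + 1))) F = F) (ht : liftP (sw a (i + 1)) F = F) :
    liftP (sw b (c + (i + 1)))
      (symBlock a 0 k (Ub (fun i => tV b (c + i)) (fun i => tV a i) k * F)) =
    symBlock a 0 k (Ub (fun i => tV b (c + i)) (fun i => tV a i) k * F) := by
  symm
  rw [← sub_eq_zero, liftP_symBlock _ _ _ _ hab, ← symBlock_sub]
  let i' : Fin k := ⟨i, by omega⟩
  let j' : Fin k := ⟨i + 1, hi⟩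
  have hsw : blockPerm a 0 k (Equiv.swap i' j') = sw a (i + 1) := by
    rw [blockPerm_swap a 0 k i' j' rfl]
    congr 1
    show 0 + 1 + i = i + 1
    omega
  have hD := t_D' a k i' j' rfl
  refine symBlock_zero_of_inv a k _ i' j' (by simp [i', j']) ?_
  have hDD := DD_split a k i' j' rfl
  have hff : ff a i' j' = q2⁻¹ * tV a (i + 1) - q2 * tV a (i + 1 + 1) := by
    unfold ff
    rw [show 0 + 1 + (i' : ℕ) = i + 1 by simp [i']; omega,
      show 0 + 1 + (j' : ℕ) = i + 1 + 1 by simp [j']; omega]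
  rw [hsw] at hD ⊢
  have hU := Ub_split a b c k i hi
  have hsU : liftP (sw b (c + (i + 1))) (Ub (fun i => tV b (c + i)) (fun i => tV a i) k * F) =
      dl a b c i (i + 1) * dl a b c (i + 1) i * gm a b c i i * RR a b c k i * F := by
    rw [hU]
    simp only [map_mul, hs, s_RR _ _ _ _ _ hab hi, s_dl _ _ _ _ _ _ hab, s_gm _ _ _ _ _ _ hab,
      Equiv.swap_apply_left, Equiv.swap_apply_right]
  rw [hsU, hU, hDD, hff]
  simp only [map_mul, map_sub, map_inv₀, liftP_q2, ht, hD, t_RR _ _ _ _ _ hab,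
    t_dl _ _ _ _ _ _ hab, t_gm _ _ _ _ _ _ hab, t_y, Equiv.swap_apply_left,
    Equiv.swap_apply_right]
  have hne : ∀ l l', tV b l - tV a l' ≠ 0 := fun l l' => tV_sub_ne _ _ _ _ (by simp [hab])
  have L := local_identity q2 (tV b (c + (i + 1))) (tV b (c + (i + 1 + 1)))
    (tV a (i + 1)) (tV a (i + 1 + 1)) q2_ne (tV_ne _ _) (tV_ne _ _) (hne _ _) (hne _ _) (hne _ _)
    (hne _ _)
  change _ * (dl a b c (i + 1) i * dl a b c i (i + 1) * gm a b c (i + 1) (i + 1) -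
    dl a b c (i + 1) (i + 1) * dl a b c i i * gm a b c (i + 1) i) =
    _ * (dl a b c i i * dl a b c (i + 1) (i + 1) * gm a b c i (i + 1) -
    dl a b c i (i + 1) * dl a b c (i + 1) i * gm a b c i i) at L
  linear_combination (D' a k i' j' * RR a b c k i * F) * L

/-! ### Induction over the types -/

lemma Ub_low (a b c k a' lo n : ℕ) (σ : Equiv.Perm (Fin n)) (ha : a ≠ a') (hb : b ≠ a') :
    liftP (blockPerm a' lo n σ) (Ub (fun i => tV b (c + i)) (fun i => tV a i) k) =
      Ub (fun i => tV b (c + i)) (fun i => tV a i) k := by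
  have h1 : ∀ l, liftP (blockPerm a' lo n σ) (tV a l) = tV a l := fun l => by
    rw [liftP_tV, blockPerm_ne _ _ _ _ _ _ ha]
  have h2 : ∀ l, liftP (blockPerm a' lo n σ) (tV b l) = tV b l := fun l => by
    rw [liftP_tV, blockPerm_ne _ _ _ _ _ _ hb]
  rw [Ub_eq]
  simp only [map_mul, map_prod, dl, gm, map_div₀, map_sub, map_one, map_inv₀, liftP_q2, h1, h2]

lemma Ub_sw (a b c k d l : ℕ) (ha : a ≠ d) (hb : b = d → l + 1 ≤ c) :
    liftP (sw d l) (Ub (fun i => tV b (c + i)) (fun i => tV a i) k) =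
      Ub (fun i => tV b (c + i)) (fun i => tV a i) k := by
  have h1 : ∀ x, liftP (sw d l) (tV a x) = tV a x := fun x => liftP_sw_tV_ne _ _ _ _ ha
  have h2 : ∀ x, liftP (sw d l) (tV b (c + (x + 1))) = tV b (c + (x + 1)) := fun x => by
    by_cases h : b = d
    · have := hb h
      subst h
      rw [liftP_sw_tV, Equiv.swap_apply_of_ne_of_ne] <;> omega
    · exact liftP_sw_tV_ne _ _ _ _ h
  rw [Ub_eq]
  simp only [map_mul, map_prod, dl, gm, map_div₀, map_sub, map_one, map_inv₀, liftP_q2, h1, h2]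

/-- The factor of `Ycur` -/
def UU (m : ℕ → ℕ) (a : ℕ) : K2 :=
  Ub (fun i => tV (a - 1) (m (a - 1) - m a + i)) (fun i => tV a i) (m a)

lemma iterSym_mul (N : ℕ) (m : ℕ → ℕ) (k : ℕ) (A B : K2)
    (h : ∀ a, N - k ≤ a → ∀ lo n σ, liftP (blockPerm a lo n σ) A = A) :
    iterSym N m k (A * B) = A * iterSym N m k B := by
  induction k with
  | zero => rfl
  | succ k ih =>
    rw [iterSym, iterSym, ih, symBlock_mul]
    · exact h _ (by omega) _ _
    · intro a ha
      exact h a (by omega)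

/-- The partially symmetrized product. -/
def WW (N : ℕ) (m : ℕ → ℕ) (k : ℕ) : K2 :=
  iterSym N m k (∏ a ∈ Finset.Icc (N - k) (N - 1), UU m a)

lemma WW_succ (N : ℕ) (m : ℕ → ℕ) (k : ℕ) (hk : k + 2 ≤ N) :
    WW N m (k + 1) = symBlock (N - 1 - k) 0 (m (N - 1 - k)) (UU m (N - 1 - k) * WW N m k) := by
  have h : Finset.Icc (N - (k + 1)) (N - 1) =
      insert (N - 1 - k) (Finset.Icc (N - k) (N - 1)) := by
    ext x
    simp only [Finset.mem_Icc, Finset.mem_insert]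
    omega
  unfold WW
  rw [h, Finset.prod_insert (by simp; omega), iterSym, iterSym_mul]
  intro a ha lo n σ
  exact Ub_low _ _ _ _ _ _ _ _ (by omega) (by omega)

lemma WW_high (N : ℕ) (m : ℕ → ℕ) (k : ℕ) (hk : k + 1 ≤ N) (b l : ℕ) (hb : b + k + 1 < N) :
    liftP (sw b l) (WW N m k) = WW N m k := by
  induction k with
  | zero =>
    unfold WW
    rw [iterSym, Finset.Icc_eq_empty (by omega), Finset.prod_empty, map_one]
  | succ k ih =>
    rw [WW_succ _ _ _ (by omega), liftP_symBlock _ _ _ _ (by omega), map_mul,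
      ih (by omega) (by omega), UU, Ub_sw _ _ _ _ _ _ (by omega) (by omega)]

lemma WW_sym (N j : ℕ) (m : ℕ → ℕ)
    (hmono : ∀ a b, j + 1 ≤ a → a ≤ b → b ≤ N → m b ≤ m a) (k : ℕ) (hk : k + j + 2 ≤ N)
    (b : ℕ) (hb : b = N - 1 - k) (a : ℕ) (hba : b ≤ a) (ha : a ≤ N - 1) (l : ℕ)
    (hl : m b - m a + 1 ≤ l) (hl' : l + 1 ≤ m b - m (a + 1)) :
    liftP (sw b l) (WW N m k) = WW N m k := by
  induction k generalizing a b l with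
  | zero =>
    unfold WW
    rw [iterSym, Finset.Icc_eq_empty (by omega), Finset.prod_empty, map_one]
  | succ k ih =>
    obtain ⟨d, hd⟩ : ∃ d, d = N - 1 - k := ⟨_, rfl⟩
    have hdb : d = b + 1 := by omega
    subst hdb
    rw [WW_succ _ _ _ (by omega), ← hd]
    have hhigh := WW_high N m k (by omega) b l (by omega)
    rcases Nat.eq_or_lt_of_le hba with h | h
    · subst h
      rw [liftP_symBlock _ _ _ _ (by omega), map_mul, hhigh, UU,
        Ub_sw _ _ _ _ _ _ (by omega) (fun _ => by simpa using hl')]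
    · have h1 := hmono b (b + 1) (by omega) (by omega) (by omega)
      have h2 := hmono (b + 1) a (by omega) (by omega) (by omega)
      have h3 := hmono a (a + 1) (by omega) (by omega) (by omega)
      obtain ⟨i, rfl⟩ : ∃ i, l = m b - m (b + 1) + (i + 1) :=
        ⟨l - (m b - m (b + 1)) - 1, by omega⟩
      exact key_step (b + 1) b (m b - m (b + 1)) (m (b + 1)) i (by omega) (by omega) _ hhigh
        (ih (by omega) (b + 1) hd a h ha (i + 1) (by omega) (by omega))

theorem statement10 (N j : ℕ) (m : ℕ → ℕ) (hj : 1 ≤ j) (hjN : j + 2 ≤ N)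
    (hmono : ∀ a, j + 1 ≤ a → a < N → m (a + 1) ≤ m a) (hmN : m N = 0) :
    ∀ a, j + 1 ≤ a → a ≤ N - 1 →
      ∀ σ : Equiv.Perm (Fin (m a - m (a + 1))),
        liftP (blockPerm (j + 1) (m (j + 1) - m a) (m a - m (a + 1)) σ)
            (iterSym N m (N - 2 - j) (Ycur N j m)) =
          iterSym N m (N - 2 - j) (Ycur N j m) := by
  intro a ha haN σ
  have hm : ∀ a b, j + 1 ≤ a → a ≤ b → b ≤ N → m b ≤ m a := by
    intro a b h1 h2
    induction b, h2 using Nat.le_induction with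
    | base => intro _; exact le_rfl
    | succ b hb ih =>
      intro h3
      exact (hmono b (by omega) (by omega)).trans (ih (by omega))
  have hY : iterSym N m (N - 2 - j) (Ycur N j m) = WW N m (N - 2 - j) := by
    unfold WW Ycur UU
    rw [show N - (N - 2 - j) = j + 2 by omega]
  rw [hY]
  have h1 := hm (j + 1) a le_rfl ha (by omega)
  have h2 := hm a (a + 1) ha (by omega) (by omega)
  refine inv_of_adjacent _ _ _ _ (fun l hl hl' => ?_) σ
  exact WW_sym N j m hm (N - 2 - j) (by omega) (j + 1) (by omega) a ha haN l hl (by omega)
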